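/- arXiv:math/0305124 — 2 statements merged into one kernel-verified Lean document; each statement's English description precedes it below -/
import Mathlib

section
/- An alternating 2-form β on ℝ⁷ is of the form β = v⌟φ for some v ∈ ℝ⁷ (i.e. β(x,y) = φ(v,x,y) for all x,y) if and only if for every alternating 2-form η on ℝ⁷ one has η ∧ β ∧ φ = 2⟨η,β⟩ · vol, where ⟨η,β⟩ := Σ_{a<b} η(e_a,e_b) β(e_a,e_b). (This characterizes the 7-dimensional summand Λ²₇, on which wedging with φ acts as 2 times the Hodge star.) -/
/-!
Write `β` also for the matrix of coefficients `β(e_a, e_b)`. Expanding the wedge product gives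
`η ∧ β ∧ φ = ¼ (Σ η_{ab} (*φ)_{abcd} β_{cd}) · vol`, and the contraction identity
`Σ_k ε_{abk} ε_{kcd} = δ_{ac} δ_{bd} - δ_{ad} δ_{bc} + (*φ)_{abcd}` turns the inner sum into
`[⟨β⟩]_{ab} - 2 β_{ab}`. Hence the condition on `β` reads `Σ η_{ab} ([⟨β⟩] - 6 β)_{ab} = 0` for
all `η`, that is `[⟨β⟩] = 6 β`. As `⟨[v]⟩ = 6 v`, this says precisely that `β = [v]` for
some `v`, namely `v = ⟨β⟩ / 6`, and `[v]` is the coefficient matrix of `v ⌟ φ`.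
-/

open scoped BigOperators Matrix

noncomputable section

namespace G2

/-- The standard basis vector `e i` of `ℝ⁷`. -/
def e (i : Fin 7) : Fin 7 → ℝ := fun j => if j = i then 1 else 0

/-- The 3-form `e^a ∧ e^b ∧ e^c` (determinant convention), evaluated on `(x, y, z)`. -/
def w3 (a b c : Fin 7) (x y z : Fin 7 → ℝ) : ℝ :=
  x a * (y b * z c - y c * z b) - x b * (y a * z c - y c * z a)
    + x c * (y a * z b - y b * z a)

/-- The 4-form `e^a ∧ e^b ∧ e^c ∧ e^d`, evaluated on `(x, y, z, w)`. -/
def w4 (a b c d : Fin 7) (x y z w : Fin 7 → ℝ) : ℝ :=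
  Matrix.det !![x a, x b, x c, x d; y a, y b, y c, y d;
                z a, z b, z c, z d; w a, w b, w c, w d]

/-- The fundamental `G₂` 3-form
`φ = e^{123}+e^{145}+e^{167}+e^{246}-e^{257}-e^{347}-e^{356}` (indices shifted to start at 0),
as a trilinear alternating function of three vectors. -/
def phi (x y z : Fin 7 → ℝ) : ℝ :=
  w3 0 1 2 x y z + w3 0 3 4 x y z + w3 0 5 6 x y z + w3 1 3 5 x y z
    - w3 1 4 6 x y z - w3 2 3 6 x y z - w3 2 4 5 x y z

/-- The 4-form `ψ = *φ = e^{4567}+e^{2367}+e^{2345}+e^{1357}-e^{1346}-e^{1256}-e^{1247}`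
(indices shifted to start at 0), as a function of four vectors. -/
def psi (x y z w : Fin 7 → ℝ) : ℝ :=
  w4 3 4 5 6 x y z w + w4 1 2 5 6 x y z w + w4 1 2 3 4 x y z w + w4 0 2 4 6 x y z w
    - w4 0 2 3 5 x y z w - w4 0 1 4 5 x y z w - w4 0 1 3 6 x y z w

/-- `ε_{ijk} = φ(e_i, e_j, e_k)`. -/
def eps (i j k : Fin 7) : ℝ := phi (e i) (e j) (e k)

/-- `ε_{ijkl} = ψ(e_i, e_j, e_k, e_l)`. -/
def eps4 (i j k l : Fin 7) : ℝ := psi (e i) (e j) (e k) (e l)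

/-- The volume form `e^1 ∧ ⋯ ∧ e^7`, evaluated on a 7-tuple of vectors. -/
def vol (v : Fin 7 → (Fin 7 → ℝ)) : ℝ := Matrix.det (Matrix.of fun i j => v i j)

/-- The matrix `[v]` with `[v]_{ij} = Σ_k ε_{ijk} v_k`. -/
def bracket (v : Fin 7 → ℝ) : Matrix (Fin 7) (Fin 7) ℝ :=
  Matrix.of fun i j => ∑ k : Fin 7, eps i j k * v k

/-- The vector `⟨A⟩` with `⟨A⟩_i = Σ_{j,k} ε_{ijk} A_{jk}`. -/
def angle (A : Matrix (Fin 7) (Fin 7) ℝ) : Fin 7 → ℝ :=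
  fun i => ∑ j : Fin 7, ∑ k : Fin 7, eps i j k * A j k

/-- Wedge product of two 2-forms (determinant convention), evaluated on four vectors. -/
def wedge22 (A B : (Fin 7 → ℝ) → (Fin 7 → ℝ) → ℝ) (v : Fin 4 → (Fin 7 → ℝ)) : ℝ :=
  (1 / 4 : ℝ) * ∑ σ : Equiv.Perm (Fin 4),
    ((Equiv.Perm.sign σ : ℤ) : ℝ) * (A (v (σ 0)) (v (σ 1)) * B (v (σ 2)) (v (σ 3)))

/-- Wedge product of three 2-forms (determinant convention), evaluated on six vectors. -/
def wedge222 (A B C : (Fin 7 → ℝ) → (Fin 7 → ℝ) → ℝ) (v : Fin 6 → (Fin 7 → ℝ)) : ℝ :=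
  (1 / 8 : ℝ) * ∑ σ : Equiv.Perm (Fin 6),
    ((Equiv.Perm.sign σ : ℤ) : ℝ) *
      (A (v (σ 0)) (v (σ 1)) * B (v (σ 2)) (v (σ 3)) * C (v (σ 4)) (v (σ 5)))

/-- Wedge product of two 2-forms and a 3-form (determinant convention),
evaluated on seven vectors. -/
def wedge223 (A B : (Fin 7 → ℝ) → (Fin 7 → ℝ) → ℝ)
    (C : (Fin 7 → ℝ) → (Fin 7 → ℝ) → (Fin 7 → ℝ) → ℝ)
    (v : Fin 7 → (Fin 7 → ℝ)) : ℝ :=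
  (1 / 24 : ℝ) * ∑ σ : Equiv.Perm (Fin 7),
    ((Equiv.Perm.sign σ : ℤ) : ℝ) *
      (A (v (σ 0)) (v (σ 1)) * B (v (σ 2)) (v (σ 3)) * C (v (σ 4)) (v (σ 5)) (v (σ 6)))

/-- The map `i_φ : S²(ℝ⁷)* → Λ³(ℝ⁷)*`,
`i_φ(h) = Σ_{i,j,k,l} ε_{ikl} h_{ij} e^j ∧ e^k ∧ e^l`, evaluated on `(x, y, z)`. -/
def iphi (h : Fin 7 → Fin 7 → ℝ) (x y z : Fin 7 → ℝ) : ℝ :=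
  ∑ i : Fin 7, ∑ j : Fin 7, ∑ k : Fin 7, ∑ l : Fin 7, eps i k l * h i j * w3 j k l x y z

/-- The sign of `j - i`: the factor contributed by a pair of indices to the Levi-Civita symbol. -/
def indexSign {n : ℕ} (i j : Fin n) : ℤ := if i < j then 1 else if i = j then 0 else -1

theorem indexSign_swap {n : ℕ} (i j : Fin n) : indexSign i j = -indexSign j i := by
  rcases lt_trichotomy i j with h | rfl | h
  · simp [indexSign, h, h.not_gt, h.ne']
  · simp [indexSign]
  · simp [indexSign, h, h.not_gt, h.ne']

/-- The Levi-Civita symbol `ε_{g 0 ⋯ g (n-1)}`. Unlike `Equiv.Perm.sign` it allows repeated indices,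
so that sums over permutations can be extended to sums over all index tuples. -/
def leviCivita {n : ℕ} (g : Fin n → Fin n) : ℤ :=
  ∏ j, ∏ i ∈ Finset.Iio j, indexSign (g i) (g j)

theorem leviCivita_comp_perm {n : ℕ} (g : Fin n → Fin n) (σ : Equiv.Perm (Fin n)) :
    leviCivita (g ∘ σ) = Equiv.Perm.sign σ * leviCivita g :=
  σ.prod_Iio_comp_eq_sign_mul_prod fun i j => indexSign_swap (g i) (g j)

theorem leviCivita_id (n : ℕ) : leviCivita (id : Fin n → Fin n) = 1 :=
  Finset.prod_eq_one fun _ _ => Finset.prod_eq_one fun _ hi => if_pos (Finset.mem_Iio.mp hi)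

theorem leviCivita_perm {n : ℕ} (σ : Equiv.Perm (Fin n)) :
    leviCivita (σ : Fin n → Fin n) = Equiv.Perm.sign σ := by
  simpa [leviCivita_id] using leviCivita_comp_perm id σ

theorem leviCivita_eq_zero_of_not_injective {n : ℕ} {g : Fin n → Fin n}
    (hg : ¬ Function.Injective g) : leviCivita g = 0 := by
  obtain ⟨i, j, h, hij⟩ := Function.not_injective_iff.mp hg
  wlog hlt : i < j generalizing i j
  · exact this j i h.symm hij.symm (hij.lt_or_gt.resolve_left hlt)
  exact Finset.prod_eq_zero (Finset.mem_univ j) <|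
    Finset.prod_eq_zero (Finset.mem_Iio.mpr hlt) (by simp [indexSign, h])

theorem leviCivita_swap {n : ℕ} (g : Fin n → Fin n) {i j : Fin n} (hij : i ≠ j) :
    leviCivita (g ∘ Equiv.swap i j) = -leviCivita g := by
  simp [leviCivita_comp_perm, Equiv.Perm.sign_swap hij]

theorem sum_sign_mul_eq_sum_leviCivita_mul {n : ℕ} {R : Type*} [Ring R]
    (F : (Fin n → Fin n) → R) :
    ∑ σ : Equiv.Perm (Fin n), ((Equiv.Perm.sign σ : ℤ) : R) * F σ =
      ∑ g, (leviCivita g : R) * F g := by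
  refine Fintype.sum_of_injective (fun σ : Equiv.Perm (Fin n) => (σ : Fin n → Fin n))
    DFunLike.coe_injective _ _ (fun g hg => ?_) fun σ => by rw [leviCivita_perm]
  have not_injective : ¬ Function.Injective g := fun h =>
    hg ⟨Equiv.ofBijective g (Finite.injective_iff_bijective.mp h), rfl⟩
  rw [leviCivita_eq_zero_of_not_injective not_injective, Int.cast_zero, zero_mul]

/-- Kernel evaluation of `leviCivita` itself is slow, because it unfolds `Finset.Iio`. -/
theorem leviCivita_seven (a b c d i j k : Fin 7) : leviCivita ![a, b, c, d, i, j, k] =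
    indexSign a b * (indexSign a c * indexSign b c)
      * (indexSign a d * indexSign b d * indexSign c d)
      * (indexSign a i * indexSign b i * indexSign c i * indexSign d i)
      * (indexSign a j * indexSign b j * indexSign c j * indexSign d j * indexSign i j)
      * (indexSign a k * indexSign b k * indexSign c k * indexSign d k * indexSign i k
        * indexSign j k) := by
  have Iio_eq : ∀ n : Fin 7, Finset.Iio n = Finset.univ.filter (· < n) := by decide
  simp [leviCivita, Fin.prod_univ_seven, Iio_eq, Finset.prod_filter]

theorem sum_vecCons {n : ℕ} {α M : Type*} [Fintype α] [AddCommMonoid M]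
    (F : (Fin (n + 1) → α) → M) : ∑ g, F g = ∑ a, ∑ h, F (Matrix.vecCons a h) := by
  classical
  rw [← (Fin.consEquiv fun _ => α).sum_comp, Fintype.sum_prod_type]
  rfl

theorem leviCivita_swap_four_five (a b c d i j k : Fin 7) :
    leviCivita ![a, b, c, d, j, i, k] = -leviCivita ![a, b, c, d, i, j, k] := by
  rw [← leviCivita_swap _ (show (4 : Fin 7) ≠ 5 by decide)]
  congr 1
  ext x
  fin_cases x <;> rfl

theorem leviCivita_swap_five_six (a b c d i j k : Fin 7) :
    leviCivita ![a, b, c, d, i, k, j] = -leviCivita ![a, b, c, d, i, j, k] := by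
  rw [← leviCivita_swap _ (show (5 : Fin 7) ≠ 6 by decide)]
  congr 1
  ext x
  fin_cases x <;> rfl

theorem sum_mul_w3 (F : Fin 7 → Fin 7 → Fin 7 → ℝ) (swap_left : ∀ i j k, F j i k = -F i j k)
    (swap_right : ∀ i j k, F i k j = -F i j k) (a b c : Fin 7) :
    ∑ i, ∑ j, ∑ k, F i j k * w3 a b c (e i) (e j) (e k) = 6 * F a b c := by
  have expand : ∑ i, ∑ j, ∑ k, F i j k * w3 a b c (e i) (e j) (e k) =
      F a b c - F a c b - (F b a c - F c a b) + (F b c a - F c b a) := by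
    simp only [w3, e, mul_ite, mul_one, mul_zero, mul_sub, mul_add, Finset.sum_add_distrib,
      Finset.sum_sub_distrib, Finset.sum_ite_eq, Finset.mem_univ, ↓reduceIte]
    ring
  rw [expand]
  linarith [swap_right a b c, swap_left a b c, swap_right b a c, swap_left a c b, swap_left b c a]

theorem wedge223_w3 (A B : (Fin 7 → ℝ) → (Fin 7 → ℝ) → ℝ) (a b c : Fin 7) :
    wedge223 A B (w3 a b c) e = 1 / 4 * ∑ p, ∑ q, ∑ r, ∑ s,
      (leviCivita ![p, q, r, s, a, b, c] : ℝ) * (A (e p) (e q) * B (e r) (e s)) := by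
  have contract (p q r s : Fin 7) :
      ∑ i, ∑ j, ∑ k, (leviCivita ![p, q, r, s, i, j, k] : ℝ) *
          (A (e p) (e q) * B (e r) (e s) * w3 a b c (e i) (e j) (e k)) =
        6 * ((leviCivita ![p, q, r, s, a, b, c] : ℝ) * (A (e p) (e q) * B (e r) (e s))) := by
    simp only [← mul_assoc _ (_ * _) (w3 a b c _ _ _)]
    refine sum_mul_w3 _ (fun i j k => ?_) (fun i j k => ?_) a b c
    · rw [leviCivita_swap_four_five, Int.cast_neg, neg_mul]
    · rw [leviCivita_swap_five_six, Int.cast_neg, neg_mul]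
  rw [wedge223, sum_sign_mul_eq_sum_leviCivita_mul fun g =>
    A (e (g 0)) (e (g 1)) * B (e (g 2)) (e (g 3)) * w3 a b c (e (g 4)) (e (g 5)) (e (g 6))]
  simp only [sum_vecCons, Fintype.sum_subsingleton _ ![], Matrix.cons_val, contract,
    ← Finset.mul_sum]
  ring

/-- The components `(*φ)_{abcd}` of the Hodge dual of `φ`, obtained term by term from
`*(e^{ijk})_{abcd} = ε_{abcdijk}`. -/
def starPhi (a b c d : Fin 7) : ℤ :=
  leviCivita ![a, b, c, d, 0, 1, 2] + leviCivita ![a, b, c, d, 0, 3, 4]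
    + leviCivita ![a, b, c, d, 0, 5, 6] + leviCivita ![a, b, c, d, 1, 3, 5]
    - leviCivita ![a, b, c, d, 1, 4, 6] - leviCivita ![a, b, c, d, 2, 3, 6]
    - leviCivita ![a, b, c, d, 2, 4, 5]

theorem wedge223_phi (A B : (Fin 7 → ℝ) → (Fin 7 → ℝ) → ℝ) :
    wedge223 A B phi e = 1 / 4 * ∑ a, ∑ b, ∑ c, ∑ d,
      (starPhi a b c d : ℝ) * (A (e a) (e b) * B (e c) (e d)) := by
  have expand : wedge223 A B phi e =
      wedge223 A B (w3 0 1 2) e + wedge223 A B (w3 0 3 4) e + wedge223 A B (w3 0 5 6) e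
        + wedge223 A B (w3 1 3 5) e - wedge223 A B (w3 1 4 6) e - wedge223 A B (w3 2 3 6) e
        - wedge223 A B (w3 2 4 5) e := by
    simp only [wedge223, phi, mul_add, mul_sub, Finset.sum_add_distrib, Finset.sum_sub_distrib]
  simp only [expand, wedge223_w3, starPhi, Int.cast_add, Int.cast_sub, add_mul, sub_mul, mul_add,
    mul_sub, Finset.sum_add_distrib, Finset.sum_sub_distrib]

section TensorProduct

variable {R V : Type*} [CommRing R] [AddCommGroup V] [Module R V]

/-- The multilinear map `A(v₀, v₁) B(v₂, v₃) C(v₄, v₅, v₆)`, whose alternatization is a multiple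
of the wedge product of `A`, `B` and `C`. -/
def tensor223 (A B : MultilinearMap R (fun _ : Fin 2 => V) R)
    (C : MultilinearMap R (fun _ : Fin 3 => V) R) : MultilinearMap R (fun _ : Fin 7 => V) R :=
  ((LinearMap.mul' R R).compMultilinearMap
    (((LinearMap.mul' R R).compMultilinearMap (A.domCoprod B)).domCoprod C)).domDomCongr
      ((finSumFinEquiv.sumCongr (Equiv.refl (Fin 3))).trans finSumFinEquiv)

theorem tensor223_apply (A B : MultilinearMap R (fun _ : Fin 2 => V) R)
    (C : MultilinearMap R (fun _ : Fin 3 => V) R) (v : Fin 7 → V) :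
    tensor223 A B C v = A ![v 0, v 1] * B ![v 2, v 3] * C ![v 4, v 5, v 6] := by
  simp only [tensor223, MultilinearMap.domDomCongr_apply, LinearMap.compMultilinearMap_apply,
    MultilinearMap.domCoprod_apply, LinearMap.mul'_apply]
  refine congrArg₂ _ (congrArg₂ _ (congrArg A ?_) (congrArg B ?_)) (congrArg C ?_) <;>
    exact funext fun i => by fin_cases i <;> rfl

end TensorProduct

theorem coe_basisFun : ⇑(Pi.basisFun ℝ (Fin 7)) = e := by
  ext i j
  simp [e, Pi.single_apply]

theorem vol_eq_basis_det (v : Fin 7 → Fin 7 → ℝ) : vol v = (Pi.basisFun ℝ (Fin 7)).det v :=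
  (Pi.basisFun_det_apply v).symm

theorem vol_e : vol e = 1 := by
  rw [vol_eq_basis_det, ← coe_basisFun, Module.Basis.det_self]

theorem wedge223_eq_mul_vol (A B : MultilinearMap ℝ (fun _ : Fin 2 => Fin 7 → ℝ) ℝ)
    (C : MultilinearMap ℝ (fun _ : Fin 3 => Fin 7 → ℝ) ℝ) (v : Fin 7 → Fin 7 → ℝ) :
    wedge223 (fun x y => A ![x, y]) (fun x y => B ![x, y]) (fun x y z => C ![x, y, z]) v =
      wedge223 (fun x y => A ![x, y]) (fun x y => B ![x, y]) (fun x y z => C ![x, y, z]) e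
        * vol v := by
  have eq_alternatization (u : Fin 7 → Fin 7 → ℝ) :
      wedge223 (fun x y => A ![x, y]) (fun x y => B ![x, y]) (fun x y z => C ![x, y, z]) u =
        ((1 / 24 : ℝ) • MultilinearMap.alternatization (tensor223 A B C)) u := by
    simp [wedge223, MultilinearMap.alternatization_apply, tensor223_apply, Units.smul_def]
  rw [eq_alternatization, eq_alternatization, ← coe_basisFun, vol_eq_basis_det, ← smul_eq_mul,
    ← AlternatingMap.smul_apply, ← AlternatingMap.eq_smul_basis_det]

/-- The wedge product of the coordinate functionals `e^{s i}`, `i : ι`: it selects the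
coordinates `s` of each vector and takes the determinant. -/
def coordForm {R ι κ : Type*} [CommRing R] [Fintype ι] [DecidableEq ι] (s : ι → κ) :
    (κ → R) [⋀^ι]→ₗ[R] R :=
  Matrix.detRowAlternating.compLinearMap (LinearMap.funLeft R R s)

theorem coordForm_fin_three (a b c : Fin 7) (x y z : Fin 7 → ℝ) :
    coordForm ![a, b, c] ![x, y, z] = w3 a b c x y z := by
  refine (Matrix.det_fin_three (R := ℝ) fun i => ![x, y, z] i ∘ ![a, b, c]).trans ?_
  simp only [Function.comp_apply, Matrix.cons_val, w3]
  ring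

/-- `phi` as a bundled alternating map, whose contractions `v ⌟ φ` can serve as test forms `η`. -/
def phiForm : (Fin 7 → ℝ) [⋀^Fin 3]→ₗ[ℝ] ℝ :=
  coordForm ![0, 1, 2] + coordForm ![0, 3, 4] + coordForm ![0, 5, 6] + coordForm ![1, 3, 5]
    - coordForm ![1, 4, 6] - coordForm ![2, 3, 6] - coordForm ![2, 4, 5]

theorem phiForm_apply (x y z : Fin 7 → ℝ) : phiForm ![x, y, z] = phi x y z := by
  simp [phiForm, phi, coordForm_fin_three]

/-- The integer components `(e^{abc})_{ijk}`, to be evaluated by kernel reduction. -/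
def w3Int (a b c i j k : Fin 7) : ℤ :=
  let δ (p q : Fin 7) : ℤ := if q = p then 1 else 0
  δ i a * (δ j b * δ k c - δ j c * δ k b) - δ i b * (δ j a * δ k c - δ j c * δ k a)
    + δ i c * (δ j a * δ k b - δ j b * δ k a)

/-- The integer counterpart of `eps`, to be evaluated by kernel reduction. -/
def epsInt (i j k : Fin 7) : ℤ :=
  w3Int 0 1 2 i j k + w3Int 0 3 4 i j k + w3Int 0 5 6 i j k + w3Int 1 3 5 i j k
    - w3Int 1 4 6 i j k - w3Int 2 3 6 i j k - w3Int 2 4 5 i j k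

theorem eps_eq_epsInt (i j k : Fin 7) : eps i j k = epsInt i j k := by
  simp [eps, phi, w3, e, epsInt, w3Int]

theorem sum_epsInt_mul_epsInt : ∀ a b c d : Fin 7,
    ∑ k, epsInt a b k * epsInt k c d =
      (if a = c ∧ b = d then 1 else 0) - (if a = d ∧ b = c then 1 else 0)
        + starPhi a b c d := by
  simp only [starPhi, leviCivita_seven, indexSign]
  decide +kernel

theorem sum_eps_mul_eps (a b c d : Fin 7) :
    ∑ k, eps a b k * eps k c d =
      (if a = c ∧ b = d then 1 else 0) - (if a = d ∧ b = c then 1 else 0)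
        + starPhi a b c d := by
  simp only [eps_eq_epsInt]
  exact_mod_cast sum_epsInt_mul_epsInt a b c d

theorem sum_sum_epsInt_mul_epsInt : ∀ i l : Fin 7,
    ∑ j, ∑ k, epsInt i j k * epsInt j k l = if i = l then 6 else 0 := by
  decide +kernel

theorem sum_sum_eps_mul_eps (i l : Fin 7) :
    ∑ j, ∑ k, eps i j k * eps j k l = if i = l then 6 else 0 := by
  simp only [eps_eq_epsInt]
  exact_mod_cast sum_sum_epsInt_mul_epsInt i l

theorem angle_bracket (v : Fin 7 → ℝ) : angle (bracket v) = (6 : ℝ) • v := by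
  ext i
  calc angle (bracket v) i = ∑ l, (∑ j, ∑ k, eps i j k * eps j k l) * v l := by
        simp only [angle, bracket, Matrix.of_apply, Finset.mul_sum, Finset.sum_mul, mul_assoc]
        exact Finset.sum_comm_cycle
    _ = 6 * v i := by simp [sum_sum_eps_mul_eps]

theorem sum_starPhi_mul (M : Matrix (Fin 7) (Fin 7) ℝ) (hM : Mᵀ = -M) (a b : Fin 7) :
    ∑ c, ∑ d, (starPhi a b c d : ℝ) * M c d = bracket (angle M) a b - 2 * M a b := by
  have bracket_angle : bracket (angle M) a b = ∑ c, ∑ d, (∑ k, eps a b k * eps k c d) * M c d := by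
    simp only [bracket, angle, Matrix.of_apply, Finset.mul_sum, Finset.sum_mul, mul_assoc]
    exact Finset.sum_comm_cycle.symm
  simp only [bracket_angle, sum_eps_mul_eps, add_mul, sub_mul, Finset.sum_add_distrib,
    Finset.sum_sub_distrib]
  have swap : M b a = -M a b := congrFun (congrFun hM a) b
  simp only [ite_and, ite_mul, one_mul, zero_mul, Finset.sum_ite_irrel, Finset.sum_ite_eq,
    Finset.mem_univ, ↓reduceIte, Finset.sum_const_zero, swap]
  ring

theorem two_mul_sum_sum_if_lt {ι R : Type*} [Fintype ι] [LinearOrder ι] [Semiring R]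
    (f : ι → ι → R) (symm : ∀ a b, f a b = f b a) (diag : ∀ a, f a a = 0) :
    2 * ∑ a, ∑ b, (if a < b then f a b else 0) = ∑ a, ∑ b, f a b := by
  have lower : ∑ a, ∑ b, (if a < b then f a b else 0) = ∑ a, ∑ b, if b < a then f a b else 0 := by
    rw [Finset.sum_comm]
    simp only [symm]
  rw [two_mul]
  nth_rw 2 [lower]
  simp only [← Finset.sum_add_distrib]
  refine Finset.sum_congr rfl fun a _ => Finset.sum_congr rfl fun b _ => ?_
  rcases lt_trichotomy a b with h | rfl | h
  · simp [h, h.not_gt]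
  · simp [diag]
  · simp [h, h.not_gt]

/-- The matrix of coefficients `β(e_a, e_b)` of a 2-form. -/
def coeffMatrix : (Fin 7 → ℝ) [⋀^Fin 2]→ₗ[ℝ] ℝ →ₗ[ℝ] Matrix (Fin 7) (Fin 7) ℝ where
  toFun β := Matrix.of fun a b => β ![e a, e b]
  map_add' _ _ := rfl
  map_smul' _ _ := rfl

theorem coeffMatrix_apply (β : (Fin 7 → ℝ) [⋀^Fin 2]→ₗ[ℝ] ℝ) (a b : Fin 7) :
    coeffMatrix β a b = β ![e a, e b] := rfl

theorem coeffMatrix_swap (β : (Fin 7 → ℝ) [⋀^Fin 2]→ₗ[ℝ] ℝ) (a b : Fin 7) :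
    coeffMatrix β a b = -coeffMatrix β b a := by
  simpa [coeffMatrix_apply] using β.map_swap ![e b, e a] (show (0 : Fin 2) ≠ 1 by decide)

theorem coeffMatrix_transpose (β : (Fin 7 → ℝ) [⋀^Fin 2]→ₗ[ℝ] ℝ) :
    (coeffMatrix β)ᵀ = -coeffMatrix β :=
  Matrix.ext fun a b => coeffMatrix_swap β b a

theorem coeffMatrix_injective : Function.Injective coeffMatrix := fun β γ h => by
  refine (Pi.basisFun ℝ (Fin 7)).ext_alternating fun s _ => ?_
  have basis_pair : (fun i => Pi.basisFun ℝ (Fin 7) (s i)) = ![e (s 0), e (s 1)] := by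
    rw [coe_basisFun]
    funext i
    fin_cases i <;> rfl
  rw [basis_pair]
  exact congrFun (congrFun h (s 0)) (s 1)

theorem phi_rotate (x y z : Fin 7 → ℝ) : phi x y z = phi y z x := by
  unfold phi w3
  ring

theorem coeffMatrix_phiForm_curryLeft (v : Fin 7 → ℝ) :
    coeffMatrix (phiForm.curryLeft v) = bracket v := by
  have basis_expansion : v = ∑ k, v k • e k := by
    rw [← coe_basisFun]
    exact ((Pi.basisFun ℝ (Fin 7)).sum_repr v).symm
  ext a b
  calc coeffMatrix (phiForm.curryLeft v) a b = ∑ k, v k * phi (e k) (e a) (e b) := by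
        conv_lhs => rw [basis_expansion]
        simp only [map_sum, map_smul]
        simp only [Matrix.sum_apply, Matrix.smul_apply, smul_eq_mul, coeffMatrix_apply,
          AlternatingMap.curryLeft_apply_apply, phiForm_apply]
    _ = ∑ k, eps a b k * v k := by
        refine Finset.sum_congr rfl fun k _ => ?_
        rw [phi_rotate, mul_comm, eps]

theorem forall_eq_phi_iff (β : (Fin 7 → ℝ) [⋀^Fin 2]→ₗ[ℝ] ℝ) (v : Fin 7 → ℝ) :
    (∀ x y, β ![x, y] = phi v x y) ↔ coeffMatrix β = bracket v := by
  rw [← coeffMatrix_phiForm_curryLeft, coeffMatrix_injective.eq_iff]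
  refine ⟨fun h => AlternatingMap.ext fun u => ?_, fun h x y => ?_⟩
  · rw [show u = ![u 0, u 1] by funext i; fin_cases i <;> rfl, h,
      AlternatingMap.curryLeft_apply_apply, phiForm_apply]
  · rw [h, AlternatingMap.curryLeft_apply_apply, phiForm_apply]

theorem bracket_smul (r : ℝ) (v : Fin 7 → ℝ) : bracket (r • v) = r • bracket v := by
  ext i j
  simp [bracket, Finset.mul_sum, mul_left_comm]

theorem exists_eq_bracket_iff (M : Matrix (Fin 7) (Fin 7) ℝ) :
    (∃ v, M = bracket v) ↔ bracket (angle M) = (6 : ℝ) • M := by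
  constructor
  · rintro ⟨v, rfl⟩
    rw [angle_bracket, bracket_smul]
  · intro h
    exact ⟨(6 : ℝ)⁻¹ • angle M, by rw [bracket_smul, h, inv_smul_smul₀ (by norm_num)]⟩

theorem wedge223_phi_sub_two_mul_inner (η β : (Fin 7 → ℝ) [⋀^Fin 2]→ₗ[ℝ] ℝ)
    (v : Fin 7 → Fin 7 → ℝ) :
    wedge223 (fun x y => η ![x, y]) (fun x y => β ![x, y]) phi v
        - (2 * ∑ a, ∑ b, if a < b then η ![e a, e b] * β ![e a, e b] else 0) * vol v =
      1 / 4 * (∑ a, ∑ b, coeffMatrix η a b *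
        (bracket (angle (coeffMatrix β)) - (6 : ℝ) • coeffMatrix β) a b) * vol v := by
  have wedge_eq : wedge223 (fun x y => η ![x, y]) (fun x y => β ![x, y]) phi v =
      1 / 4 * (∑ a, ∑ b, coeffMatrix η a b *
        ∑ c, ∑ d, (starPhi a b c d : ℝ) * coeffMatrix β c d) * vol v := by
    have := wedge223_eq_mul_vol η.toMultilinearMap β.toMultilinearMap phiForm.toMultilinearMap v
    simp only [AlternatingMap.coe_multilinearMap, phiForm_apply] at this
    rw [this, wedge223_phi]
    simp only [coeffMatrix_apply, Finset.mul_sum, mul_left_comm]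
  have inner_eq : 2 * ∑ a, ∑ b, (if a < b then η ![e a, e b] * β ![e a, e b] else 0) =
      ∑ a, ∑ b, coeffMatrix η a b * coeffMatrix β a b := by
    refine two_mul_sum_sum_if_lt _ (fun a b => ?_) fun a => ?_
    · rw [← coeffMatrix_apply, ← coeffMatrix_apply, coeffMatrix_swap η, coeffMatrix_swap β,
        neg_mul_neg]
      rfl
    · rw [η.map_eq_zero_of_eq ![e a, e a] (i := 0) (j := 1) rfl zero_ne_one, zero_mul]
  rw [wedge_eq, inner_eq, ← sub_mul, Finset.mul_sum, ← Finset.sum_sub_distrib]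
  simp only [sum_starPhi_mul _ (coeffMatrix_transpose β), Finset.mul_sum, ← Finset.sum_sub_distrib,
    Matrix.sub_apply, Matrix.smul_apply, smul_eq_mul]
  congr! 3
  ring

theorem forall_wedge223_phi_eq_iff (β : (Fin 7 → ℝ) [⋀^Fin 2]→ₗ[ℝ] ℝ) :
    (∀ (η : (Fin 7 → ℝ) [⋀^Fin 2]→ₗ[ℝ] ℝ) (v : Fin 7 → Fin 7 → ℝ),
      wedge223 (fun x y => η ![x, y]) (fun x y => β ![x, y]) phi v =
        (2 * ∑ a, ∑ b, if a < b then η ![e a, e b] * β ![e a, e b] else 0) * vol v) ↔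
      bracket (angle (coeffMatrix β)) = (6 : ℝ) • coeffMatrix β := by
  simp only [← sub_eq_zero (b := _ * vol _), wedge223_phi_sub_two_mul_inner]
  refine ⟨fun h => ?_, fun h => by simp [h]⟩
  set N := bracket (angle (coeffMatrix β)) - (6 : ℝ) • coeffMatrix β
  obtain ⟨η, hη⟩ : ∃ η, coeffMatrix η = N :=
    ⟨phiForm.curryLeft (angle (coeffMatrix β)) - (6 : ℝ) • β, by
      rw [map_sub, map_smul, coeffMatrix_phiForm_curryLeft]⟩
  have sum_sq_eq_zero : ∑ a, ∑ b, N a b * N a b = 0 := by simpa [vol_e, hη] using h η e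
  have trace_eq_zero : (N * Nᴴ).trace = 0 := by
    simpa [Matrix.trace, Matrix.mul_apply] using sum_sq_eq_zero
  exact sub_eq_zero.mp (Matrix.trace_mul_conjTranspose_self_eq_zero_iff.mp trace_eq_zero)

/-- an alternating 2-form `β` is of the form `v ⌟ φ` for some `v ∈ ℝ⁷` iff
`η ∧ β ∧ φ = 2⟨η,β⟩·vol` for every alternating 2-form `η`. -/
theorem mem_Lambda2_7_iff (β : AlternatingMap ℝ (Fin 7 → ℝ) ℝ (Fin 2)) :
    (∃ v : Fin 7 → ℝ, ∀ x y : Fin 7 → ℝ, β ![x, y] = phi v x y) ↔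
    (∀ η : AlternatingMap ℝ (Fin 7 → ℝ) ℝ (Fin 2), ∀ v : Fin 7 → (Fin 7 → ℝ),
      wedge223 (fun x y => η ![x, y]) (fun x y => β ![x, y]) phi v
        = (2 * ∑ a : Fin 7, ∑ b : Fin 7,
              if a < b then η ![e a, e b] * β ![e a, e b] else 0) * vol v) := by
  calc
    _ ↔ ∃ v, coeffMatrix β = bracket v := exists_congr fun v => forall_eq_phi_iff β v
    _ ↔ bracket (angle (coeffMatrix β)) = (6 : ℝ) • coeffMatrix β := exists_eq_bracket_iff _
    _ ↔ _ := (forall_wedge223_phi_eq_iff β).symm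

end G2

end
end

section
/- For every symmetric bilinear form h on ℝ⁷ with trace Σ_{i=1}^{7} h(e_i,e_i) = 0, one has |i_φ(h)|² = 8|h|², where |i_φ(h)|² := Σ_{a<b<c} i_φ(h)(e_a,e_b,e_c)² and |h|² := Σ_{i,j=1}^{7} h(e_i,e_j)². -/
open scoped BigOperators Matrix

noncomputable section

namespace G2

/-!
The cross product `⟨u × v, w⟩ = φ(u, v, w)` satisfies `|u × v|² = |u|² |v|² - ⟨u, v⟩²`. Polarized,
this identity gives `Σ h_{jl} ε_{ilm} ε_{kjm} = (tr h) δ_{ik} - h_{ik}` for every symmetric `h`,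
because the part of `Σ_m ε_{ilm} ε_{kjm}` that it leaves undetermined is skew under `j ↔ l`.
On basis vectors `i_φ(h)` is twice the cyclic sum of `A_{abc} = Σ_i h_{ia} ε_{ibc}`, so its squared
norm is a combination of `Σ A_{abc}²` and `Σ A_{abc} A_{bca}`, and the contraction formula evaluates
both: the first with the identity matrix in place of `h`, the second with `h` itself. In dimension
`n` this gives `|i_φ(h)|² = 2 (n - 3) |h|² + 4 (tr h)²`.
-/

section IteratedSums

theorem sum_rotate {α β γ M : Type*} [Fintype α] [Fintype β] [Fintype γ] [AddCommMonoid M]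
    (f : α → β → γ → M) : ∑ c, ∑ a, ∑ b, f a b c = ∑ a, ∑ b, ∑ c, f a b c :=
  Finset.sum_comm_cycle.symm

theorem sum_sum_comm {α β γ δ M : Type*} [Fintype α] [Fintype β] [Fintype γ] [Fintype δ]
    [AddCommMonoid M] (f : α → β → γ → δ → M) :
    ∑ a, ∑ b, ∑ c, ∑ d, f a b c d = ∑ c, ∑ d, ∑ a, ∑ b, f a b c d := by
  simpa only [Fintype.sum_prod_type] using
    Finset.sum_comm (s := .univ) (t := .univ)
      (f := fun (p : α × β) (q : γ × δ) => f p.1 p.2 q.1 q.2)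

variable {ι : Type*} [Fintype ι]

theorem sum_eq_six_nsmul_sum_lt [LinearOrder ι] {M : Type*} [AddCommMonoid M]
    (g : ι → ι → ι → M) (swap_left : ∀ a b c, g b a c = g a b c)
    (swap_right : ∀ a b c, g a c b = g a b c) (diag : ∀ a c, g a a c = 0) :
    ∑ a, ∑ b, ∑ c, g a b c = 6 • ∑ a, ∑ b, ∑ c, if a < b ∧ b < c then g a b c else 0 := by
  let u : ι → ι → ι → M := fun a b c => if a < b ∧ b < c then g a b c else 0
  change _ = 6 • ∑ a, ∑ b, ∑ c, u a b c
  have split (a b c : ι) :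
      g a b c = u a b c + u b c a + u c a b + (u a c b + u b a c + u c b a) := by
    rcases lt_trichotomy a b with hab | hab | hab <;>
      rcases lt_trichotomy b c with hbc | hbc | hbc <;>
      rcases lt_trichotomy a c with hac | hac | hac <;>
      grind
  have rotate := sum_rotate u
  have rotate' := sum_rotate fun a b c => u b c a
  have swap : ∑ a, ∑ b, ∑ c, u a c b = ∑ a, ∑ b, ∑ c, u a b c :=
    Finset.sum_congr rfl fun _ _ => Finset.sum_comm
  have swap_rotate := sum_rotate fun a b c => u a c b
  have swap_rotate' := sum_rotate fun a b c => u b a c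
  simp only [split, Finset.sum_add_distrib]
  rw [rotate', rotate, swap_rotate', swap_rotate, swap]
  abel

theorem sum_sq_cyclic_sum {R : Type*} [CommSemiring R] (f : ι → ι → ι → R) :
    ∑ a, ∑ b, ∑ c, (f a b c + f b c a + f c a b) ^ 2 =
      3 * ∑ a, ∑ b, ∑ c, f a b c ^ 2 + 6 * ∑ a, ∑ b, ∑ c, f a b c * f b c a := by
  have expand (a b c : ι) : (f a b c + f b c a + f c a b) ^ 2 =
      (f a b c ^ 2 + f b c a ^ 2 + f c a b ^ 2) +
        2 * (f a b c * f b c a + f b c a * f c a b + f c a b * f a b c) := by ring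
  have rotate_sq := sum_rotate fun a b c => f a b c ^ 2
  have rotate_sq' := sum_rotate fun a b c => f b c a ^ 2
  have rotate_mul := sum_rotate fun a b c => f a b c * f b c a
  have rotate_mul' := sum_rotate fun a b c => f b c a * f c a b
  simp only [expand, Finset.sum_add_distrib, ← Finset.mul_sum]
  rw [rotate_sq', rotate_sq, rotate_mul', rotate_mul]
  ring

end IteratedSums

section CrossProduct

variable {ι R : Type*} [Fintype ι] [CommRing R]

/-- `ε i j k = ⟨e_i × e_j, e_k⟩` are the structure constants, in an orthonormal basis, of a vector
cross product. The field `lagrange` is the identity `|u × v|² = |u|² |v|² - ⟨u, v⟩²`, polarized. -/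
structure IsCrossProduct [DecidableEq ι] (ε : ι → ι → ι → R) : Prop where
  swap_left : ∀ i j k, ε j i k = -ε i j k
  swap_right : ∀ i j k, ε i k j = -ε i j k
  lagrange : ∀ i j k l, ∑ m, ε i j m * ε k l m + ∑ m, ε k j m * ε i l m =
    2 * (if i = k then 1 else 0) * (if j = l then 1 else 0)
      - (if i = l then 1 else 0) * (if k = j then 1 else 0)
      - (if i = j then 1 else 0) * (if k = l then 1 else 0)

/-- The trilinear form `(x, y, z) ↦ ε(h x, y, z)` in coordinates, where `h` acts on vectors by
`h e_a = Σ_i h_{ia} e_i`. -/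
def compFirst (h : ι → ι → R) (ε : ι → ι → ι → R) (a b c : ι) : R :=
  ∑ i, h i a * ε i b c

theorem compFirst_mul_compFirst (h : ι → ι → R) (ε : ι → ι → ι → R) (a b c a' b' c' : ι) :
    compFirst h ε a b c * compFirst h ε a' b' c' =
      ∑ i, ∑ j, h i a * h j a' * (ε i b c * ε j b' c') := by
  simp only [compFirst, Finset.sum_mul_sum, mul_mul_mul_comm]

namespace IsCrossProduct

variable [DecidableEq ι] {ε : ι → ι → ι → R} {h : ι → ι → R}

theorem rotate (hε : IsCrossProduct ε) (i j k : ι) : ε j k i = ε i j k := by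
  rw [hε.swap_right j i k, hε.swap_left i j k, neg_neg]

variable [NoZeroDivisors R] [NeZero (2 : R)]

theorem sum_mul_contract_of_symm (hε : IsCrossProduct ε) (hsym : ∀ i j, h i j = h j i) (i k : ι) :
    ∑ j, ∑ l, h j l * ∑ m, ε i l m * ε k j m = (if i = k then ∑ j, h j j else 0) - h i k := by
  -- Relabelling `j ↔ l`: both products in the polarized identity contribute equally.
  have exchange : ∑ j, ∑ l, h j l * ∑ m, ε k l m * ε i j m =
      ∑ j, ∑ l, h j l * ∑ m, ε i l m * ε k j m := by
    rw [Finset.sum_comm]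
    refine Finset.sum_congr rfl fun j _ => Finset.sum_congr rfl fun l _ => ?_
    simp only [hsym l j, mul_comm (ε k j _)]
  refine mul_left_cancel₀ (two_ne_zero : (2 : R) ≠ 0) ?_
  calc 2 * ∑ j, ∑ l, h j l * ∑ m, ε i l m * ε k j m
      = ∑ j, ∑ l, h j l * (∑ m, ε i l m * ε k j m + ∑ m, ε k l m * ε i j m) := by
        simp only [mul_add, Finset.sum_add_distrib, exchange, two_mul]
    _ = 2 * ((if i = k then ∑ j, h j j else 0) - h i k) := by
        simp only [hε.lagrange, mul_ite, mul_one, mul_zero, mul_sub, Finset.sum_sub_distrib,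
          Finset.sum_ite_eq', Finset.mem_univ, if_true, Finset.sum_ite_eq, Finset.sum_ite_irrel,
          Finset.sum_const_zero, ← Finset.sum_mul, hsym k i]
        split_ifs <;> ring

theorem sum_mul_self (hε : IsCrossProduct ε) (i k : ι) :
    ∑ b, ∑ c, ε i b c * ε k b c = ((Fintype.card ι : R) - 1) * if i = k then 1 else 0 := by
  have contract := hε.sum_mul_contract_of_symm (h := fun j l => if j = l then 1 else 0)
    (fun j l => by simp only [eq_comm]) i k
  by_cases hik : i = k <;> simpa [hik] using contract

theorem sum_compFirst_sq (hε : IsCrossProduct ε) (h : ι → ι → R) :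
    ∑ a, ∑ b, ∑ c, compFirst h ε a b c ^ 2 =
      ((Fintype.card ι : R) - 1) * ∑ i, ∑ j, h i j ^ 2 := by
  have expand (a : ι) : ∑ b, ∑ c, compFirst h ε a b c ^ 2 =
      ∑ i, ∑ j, h i a * h j a * ∑ b, ∑ c, ε i b c * ε j b c := by
    simp only [sq, compFirst_mul_compFirst, Finset.mul_sum]
    exact sum_sum_comm _
  rw [Finset.sum_comm (f := fun i j => h i j ^ 2)]
  simp only [expand, hε.sum_mul_self, Finset.mul_sum]
  simp [sq, mul_comm]

theorem sum_compFirst_mul_rotate (hε : IsCrossProduct ε) (hsym : ∀ i j, h i j = h j i) :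
    ∑ a, ∑ b, ∑ c, compFirst h ε a b c * compFirst h ε b c a =
      (∑ i, h i i) ^ 2 - ∑ i, ∑ j, h i j ^ 2 := by
  rw [Finset.sum_comm (f := fun i j => h i j ^ 2)]
  have expand (a : ι) : ∑ b, ∑ c, compFirst h ε a b c * compFirst h ε b c a =
      ∑ i, h i a * ∑ j, ∑ b, h j b * ∑ c, ε i b c * ε a j c := by
    simp only [compFirst_mul_compFirst, hε.rotate a, Finset.mul_sum, ← mul_assoc]
    exact sum_sum_comm _
  simp only [expand, hε.sum_mul_contract_of_symm hsym]
  simp [sq, mul_sub, Finset.sum_mul]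

theorem sum_sq_cyclic_sum_compFirst (hε : IsCrossProduct ε) (hsym : ∀ i j, h i j = h j i) :
    ∑ a, ∑ b, ∑ c, (compFirst h ε a b c + compFirst h ε b c a + compFirst h ε c a b) ^ 2 =
      3 * ((Fintype.card ι : R) - 3) * ∑ i, ∑ j, h i j ^ 2 + 6 * (∑ i, h i i) ^ 2 := by
  rw [sum_sq_cyclic_sum, hε.sum_compFirst_sq, hε.sum_compFirst_mul_rotate hsym]
  ring

end IsCrossProduct

end CrossProduct

theorem w3_swap_left (a b c : Fin 7) (x y z : Fin 7 → ℝ) : w3 a b c y x z = -w3 a b c x y z := by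
  unfold w3
  ring

theorem w3_swap_right (a b c : Fin 7) (x y z : Fin 7 → ℝ) : w3 a b c x z y = -w3 a b c x y z := by
  unfold w3
  ring

theorem phi_swap_left (x y z : Fin 7 → ℝ) : phi y x z = -phi x y z := by
  simp only [phi, w3_swap_left _ _ _ x y]
  ring

theorem phi_swap_right (x y z : Fin 7 → ℝ) : phi x z y = -phi x y z := by
  simp only [phi, w3_swap_right _ _ _ x y]
  ring

theorem phi_lagrange (x y z w : Fin 7 → ℝ) :
    ∑ m, phi x y (e m) * phi z w (e m) + ∑ m, phi z y (e m) * phi x w (e m) =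
      2 * (x ⬝ᵥ z) * (y ⬝ᵥ w) - (x ⬝ᵥ w) * (z ⬝ᵥ y) - (x ⬝ᵥ y) * (z ⬝ᵥ w) := by
  simp only [phi, w3, e, mul_ite, mul_one, mul_zero, Fin.sum_univ_seven, Fin.reduceEq, if_true,
    if_false, one_ne_zero, sub_self, zero_sub, mul_neg, sub_neg_eq_add, zero_add, add_zero,
    sub_zero, zero_ne_one, dotProduct]
  ring

theorem e_dotProduct_e (i j : Fin 7) : e i ⬝ᵥ e j = if i = j then 1 else 0 := by
  simp [e, dotProduct, eq_comm]

theorem isCrossProduct_eps : IsCrossProduct eps where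
  swap_left i j k := phi_swap_left (e i) (e j) (e k)
  swap_right i j k := phi_swap_right (e i) (e j) (e k)
  lagrange i j k l := by
    simpa only [eps, e_dotProduct_e] using phi_lagrange (e i) (e j) (e k) (e l)

theorem sum_mul_w3_e (T : Fin 7 → Fin 7 → Fin 7 → ℝ) (a b c : Fin 7) :
    ∑ j, ∑ k, ∑ l, T j k l * w3 j k l (e a) (e b) (e c) =
      T a b c - T a c b - T b a c + T b c a + T c a b - T c b a := by
  simp only [w3, e, mul_sub, mul_add, Finset.sum_sub_distrib, Finset.sum_add_distrib,
    mul_ite, mul_one, mul_zero, Finset.sum_ite_eq', Finset.mem_univ, if_true,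
    Finset.sum_const_zero, Finset.sum_ite_irrel]
  ring

theorem iphi_e (h : Fin 7 → Fin 7 → ℝ) (a b c : Fin 7) :
    iphi h (e a) (e b) (e c) =
      2 * (compFirst h eps a b c + compFirst h eps b c a + compFirst h eps c a b) := by
  have skew := isCrossProduct_eps.swap_right
  simp only [iphi, sum_mul_w3_e, compFirst, ← Finset.sum_add_distrib, Finset.mul_sum]
  refine Finset.sum_congr rfl fun i _ => ?_
  rw [skew i b c, skew i c a, skew i a b]
  ring

theorem iphi_swap_left (h : Fin 7 → Fin 7 → ℝ) (x y z : Fin 7 → ℝ) :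
    iphi h y x z = -iphi h x y z := by
  simp only [iphi, w3_swap_left _ _ _ x y, mul_neg, Finset.sum_neg_distrib]

theorem iphi_swap_right (h : Fin 7 → Fin 7 → ℝ) (x y z : Fin 7 → ℝ) :
    iphi h x z y = -iphi h x y z := by
  simp only [iphi, w3_swap_right _ _ _ x y, mul_neg, Finset.sum_neg_distrib]

theorem sum_iphi_sq_eq_six_mul (h : Fin 7 → Fin 7 → ℝ) :
    ∑ a, ∑ b, ∑ c, iphi h (e a) (e b) (e c) ^ 2 =
      6 * ∑ a, ∑ b, ∑ c, if a < b ∧ b < c then iphi h (e a) (e b) (e c) ^ 2 else 0 := by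
  rw [sum_eq_six_nsmul_sum_lt, nsmul_eq_mul, Nat.cast_ofNat]
  · exact fun a b c => by rw [iphi_swap_left, neg_sq]
  · exact fun a b c => by rw [iphi_swap_right, neg_sq]
  · intro a c
    rw [self_eq_neg.mp (iphi_swap_left h (e a) (e a) (e c)), zero_pow two_ne_zero]

theorem iphi_norm_sq_general (h : Fin 7 → Fin 7 → ℝ) (hsym : ∀ i j : Fin 7, h i j = h j i) :
    (∑ a : Fin 7, ∑ b : Fin 7, ∑ c : Fin 7,
        if a < b ∧ b < c then (iphi h (e a) (e b) (e c)) ^ 2 else 0)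
      = 8 * ∑ i : Fin 7, ∑ j : Fin 7, (h i j) ^ 2 + 4 * (∑ i : Fin 7, h i i) ^ 2 := by
  have ordered := sum_iphi_sq_eq_six_mul h
  have total := isCrossProduct_eps.sum_sq_cyclic_sum_compFirst hsym
  simp only [iphi_e, mul_pow, ← Finset.mul_sum, total, Fintype.card_fin] at ordered ⊢
  linear_combination -ordered / 6

/-- for a traceless symmetric bilinear form `h`, `|i_φ(h)|² = 8|h|²`. -/
theorem iphi_norm_sq (h : Fin 7 → Fin 7 → ℝ) (hsym : ∀ i j : Fin 7, h i j = h j i)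
    (htr : ∑ i : Fin 7, h i i = 0) :
    (∑ a : Fin 7, ∑ b : Fin 7, ∑ c : Fin 7,
        if a < b ∧ b < c then (iphi h (e a) (e b) (e c)) ^ 2 else 0)
      = 8 * ∑ i : Fin 7, ∑ j : Fin 7, (h i j) ^ 2 := by
  rw [iphi_norm_sq_general h hsym, htr, zero_pow two_ne_zero, mul_zero, add_zero]

end G2

end
end
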